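/- arXiv:1909.12225 — 2 statements merged into one kernel-verified Lean document; each statement's English description precedes it below -/
import Mathlib

section
/- Let X be a compact metric space and n ≥ 1 an integer. Then UR_{n−1}(X) ≤ 4n·HC_n(X)^{1/n}; that is, for every t > 4n·HC_n(X)^{1/n} there exists a finite covering of X by open sets, each contained in a closed metric ball of radius t, such that no n+1 of the covering sets have a common point. -/
open Metric Set
open scoped ENNReal NNReal

/-- The `m`-dimensional Hausdorff content of a subset `A` of a metric space `X`:
the infimum, over all countable coverings of `A` by closed metric balls of `X` with
radii `r_i`, of `∑ r_i ^ m`. -/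
noncomputable def HC {X : Type*} [MetricSpace X] (m : ℝ) (A : Set X) : ℝ≥0∞ :=
  ⨅ (S : Set (X × ℝ≥0)) (_ : S.Countable)
    (_ : A ⊆ ⋃ p ∈ S, Metric.closedBall p.1 (p.2 : ℝ)),
    ∑' p : S, ((p : X × ℝ≥0).2 : ℝ≥0∞) ^ m

/-!
Scale the problem by `b = t / (4n)` and induct on `n`, assuming only that every ball of radius `4nb`
meets the compact set `K` in a set of content `≤ v < b ^ n`; in dimension `0` the content counts
balls, so this forces `K = ∅`.

For the step from `n` to `n + 1`, consider all ways to cover `K` by pairwise disjoint open pieces of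
radius `≤ 4(n+1)b` together with finitely many balls of radius `≤ b`, and choose one for which
`∑ r ^ n` over the balls is minimal up to a small `δ`. Around any `x`, the coarea inequality finds a
sphere of radius between `4nb + 2b` and `4nb + 4b` whose intersection with `K` is covered by balls
with `∑ r ^ n` at most, or only slightly above, `v / b`. Cutting all pieces along it and adding its
inside as a new piece makes every old ball meeting `B(x, 4nb)` superfluous. By near minimality,
`∑ r ^ n` over these old balls exceeds `v / b < b ^ n` by arbitrarily little. Thus the part of `K`
outside the pieces satisfies the induction hypothesis, and the pieces, being disjoint, raise the
multiplicity of its cover by only one.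
-/

section HausdorffContent

open scoped Topology

variable {X : Type*} [MetricSpace X] {A B : Set X}

lemma HC_mono (m : ℝ) (hAB : A ⊆ B) : HC m A ≤ HC m B :=
  le_iInf₂ fun S hS => le_iInf fun hB => iInf₂_le_of_le S hS (iInf_le _ (hAB.trans hB))

lemma HC_le_sum (m : ℝ) {F : Finset (X × ℝ≥0)} (hF : A ⊆ ⋃ p ∈ F, closedBall p.1 (p.2 : ℝ)) :
    HC m A ≤ ∑ p ∈ F, (p.2 : ℝ≥0∞) ^ m := by
  rw [← Finset.tsum_subtype' F fun p => (p.2 : ℝ≥0∞) ^ m]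
  exact iInf₂_le_of_le (F : Set (X × ℝ≥0)) F.countable_toSet (iInf_le _ hF)

lemma exists_gt_rpow_lt_add {m : ℝ} {r : ℝ≥0} (hr : (r : ℝ≥0∞) ^ m ≠ ∞) {ε : ℝ≥0∞}
    (hε : ε ≠ 0) :
    ∃ r' > r, (r' : ℝ≥0∞) ^ m < r ^ m + ε := by
  have hcont : Continuous fun s : ℝ≥0 => (s : ℝ≥0∞) ^ m :=
    ENNReal.continuous_rpow_const.comp ENNReal.continuous_coe
  have hnear : ∀ᶠ s : ℝ≥0 in 𝓝 r, (s : ℝ≥0∞) ^ m < r ^ m + ε :=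
    hcont.continuousAt.eventually_lt_const (ENNReal.lt_add_right hr hε)
  have hright : ∀ᶠ s : ℝ≥0 in 𝓝[>] r, s > r ∧ (s : ℝ≥0∞) ^ m < r ^ m + ε :=
    eventually_mem_nhdsWithin.and (hnear.filter_mono nhdsWithin_le_nhds)
  exact hright.exists

lemma exists_finset_cover_of_HC_lt (hA : IsCompact A) {m : ℝ} {c : ℝ≥0∞} (hc : HC m A < c) :
    ∃ F : Finset (X × ℝ≥0), A ⊆ ⋃ p ∈ F, closedBall p.1 (p.2 : ℝ) ∧
      ∑ p ∈ F, (p.2 : ℝ≥0∞) ^ m < c := by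
  classical
  simp only [HC, iInf_lt_iff] at hc
  obtain ⟨S, hS, hAS, hsum⟩ := hc
  have := hS.to_subtype
  obtain ⟨ε, hε, hεsum⟩ := ENNReal.exists_pos_sum_of_countable' (tsub_pos_of_lt hsum).ne' S
  have hfin (p : S) : (p.1.2 : ℝ≥0∞) ^ m ≠ ∞ := ENNReal.ne_top_of_tsum_ne_top hsum.ne_top p
  choose ρ hρ hρm using fun p : S => exists_gt_rpow_lt_add (hfin p) (hε p).ne'
  obtain ⟨T, hT⟩ := hA.elim_finite_subcover (fun p : S => ball p.1.1 (ρ p : ℝ))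
    (fun _ => isOpen_ball) fun y hy => by
      obtain ⟨p, hp, hyp⟩ := mem_iUnion₂.1 (hAS hy)
      exact mem_iUnion.2 ⟨⟨p, hp⟩, closedBall_subset_ball (NNReal.coe_lt_coe.2 (hρ _)) hyp⟩
  refine ⟨T.image fun p => (p.1.1, ρ p), ?_, ?_⟩
  · rw [Finset.set_biUnion_finset_image]
    exact hT.trans (iUnion₂_mono fun _ _ => ball_subset_closedBall)
  · calc ∑ p ∈ T.image fun p => (p.1.1, ρ p), (p.2 : ℝ≥0∞) ^ m
        ≤ ∑ p ∈ T, (ρ p : ℝ≥0∞) ^ m := Finset.sum_image_le_of_nonneg fun _ _ => zero_le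
      _ ≤ ∑ p ∈ T, ((p.1.2 : ℝ≥0∞) ^ m + ε p) := Finset.sum_le_sum fun p _ => (hρm p).le
      _ ≤ ∑' p : S, ((p.1.2 : ℝ≥0∞) ^ m + ε p) := ENNReal.sum_le_tsum T
      _ < c := by
        rw [ENNReal.tsum_add, add_comm]
        exact lt_tsub_iff_right.1 hεsum

end HausdorffContent

section Coarea

open MeasureTheory

open scoped Classical in
lemma exists_sum_filter_mem_le {ι α : Type*} [MeasurableSpace α] {μ : Measure α} {s : Set α}
    (hs : μ s ≠ 0) (hs' : μ s ≠ ∞) (G : Finset ι) {I : ι → Set α}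
    (hI : ∀ i ∈ G, MeasurableSet (I i)) (w : ι → ℝ≥0∞) :
    ∃ a ∈ s, ∑ i ∈ G with a ∈ I i, w i ≤ (∑ i ∈ G, w i * μ (I i)) / μ s := by
  have hmeas : ∀ i ∈ G, Measurable ((I i).indicator fun _ => w i) := fun i hi =>
    measurable_const.indicator (hI i hi)
  obtain ⟨a, has, ha⟩ :=
    exists_le_setLAverage hs hs' (Finset.measurable_fun_sum G hmeas).aemeasurable
  refine ⟨a, has, ?_⟩
  calc ∑ i ∈ G with a ∈ I i, w i
      = ∑ i ∈ G, (I i).indicator (fun _ => w i) a := by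
        simp only [indicator_apply, Finset.sum_filter]
    _ ≤ (∫⁻ a in s, ∑ i ∈ G, (I i).indicator (fun _ => w i) a ∂μ) / μ s := by
        rwa [setLAverage_eq] at ha
    _ ≤ (∫⁻ a, ∑ i ∈ G, (I i).indicator (fun _ => w i) a ∂μ) / μ s :=
        ENNReal.div_le_div_right (setLIntegral_le_lintegral _ _) _
    _ = (∑ i ∈ G, w i * μ (I i)) / μ s := by
        rw [lintegral_finsetSum G hmeas]
        congr 1
        exact Finset.sum_congr rfl fun i hi => lintegral_indicator_const (hI i hi) _

variable {X : Type*} [PseudoMetricSpace X]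

lemma mem_closedBall_dist_of_inter_sphere_nonempty {c x : X} {r s : ℝ}
    (h : (closedBall c r ∩ sphere x s).Nonempty) : s ∈ closedBall (dist c x) r := by
  obtain ⟨y, hyc, rfl⟩ := h
  exact (abs_dist_sub_le y c x).trans hyc

open scoped Classical in
/-- Discrete coarea inequality: the radii of the spheres about `x` meeting a ball of radius `r` lie
in an interval of length `2r`, so averaging over `s` trades a power of `r` for `1 / b`. -/
lemma exists_sum_filter_inter_sphere_le {m : ℝ} (hm : 0 ≤ m) {b : ℝ≥0} (hb : b ≠ 0)
    (G : Finset (X × ℝ≥0)) (x : X) (a : ℝ) :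
    ∃ s ∈ Icc a (a + 2 * b),
      ∑ p ∈ G with (closedBall p.1 (p.2 : ℝ) ∩ sphere x s).Nonempty, (p.2 : ℝ≥0∞) ^ m
        ≤ (∑ p ∈ G, (p.2 : ℝ≥0∞) ^ (m + 1)) / b := by
  have hvol : volume (Icc a (a + 2 * b)) = 2 * b := by
    rw [Real.volume_Icc, add_sub_cancel_left, ENNReal.ofReal_mul zero_le_two]
    simp
  obtain ⟨s, hs, hsum⟩ := exists_sum_filter_mem_le (μ := volume) (s := Icc a (a + 2 * b))
    (by simpa [hvol] using hb) isCompact_Icc.measure_ne_top G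
    (I := fun p => closedBall (dist p.1 x) p.2) (fun _ _ => measurableSet_closedBall)
    (fun p => (p.2 : ℝ≥0∞) ^ m)
  refine ⟨s, hs, ?_⟩
  calc ∑ p ∈ G with (closedBall p.1 (p.2 : ℝ) ∩ sphere x s).Nonempty, (p.2 : ℝ≥0∞) ^ m
      ≤ ∑ p ∈ G with s ∈ closedBall (dist p.1 x) (p.2 : ℝ), (p.2 : ℝ≥0∞) ^ m :=
        Finset.sum_le_sum_of_subset
          (Finset.monotone_filter_right G fun _ _ => mem_closedBall_dist_of_inter_sphere_nonempty)
    _ ≤ (∑ p ∈ G, (p.2 : ℝ≥0∞) ^ m * volume (closedBall (dist p.1 x) (p.2 : ℝ))) /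
          volume (Icc a (a + 2 * b)) := hsum
    _ = (2 * ∑ p ∈ G, (p.2 : ℝ≥0∞) ^ (m + 1)) / (2 * b) := by
        rw [hvol, Finset.mul_sum]
        congr 1
        refine Finset.sum_congr rfl fun p _ => ?_
        rw [Real.volume_closedBall, ENNReal.ofReal_mul zero_le_two, ENNReal.ofReal_coe_nnreal,
          ENNReal.ofReal_ofNat, ENNReal.rpow_add_of_nonneg _ _ hm zero_le_one, ENNReal.rpow_one]
        ring
    _ = (∑ p ∈ G, (p.2 : ℝ≥0∞) ^ (m + 1)) / b :=
        ENNReal.mul_div_mul_left _ _ two_ne_zero ENNReal.ofNat_ne_top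

end Coarea

section Cutting

variable {X : Type*} [PseudoMetricSpace X]

/-- A finite family of open sets lying in closed balls of radius `R`, of multiplicity at most `n`.
Such families covering a set witness that its Uryson width `UR_{n-1}` is at most `R`. -/
structure IsSmallOpenFamily (R : ℝ) (n : ℕ) (𝒰 : Set (Set X)) : Prop where
  finite : 𝒰.Finite
  isOpen : ∀ A ∈ 𝒰, IsOpen A
  subset_closedBall : ∀ A ∈ 𝒰, ∃ c, A ⊆ closedBall c R
  encard_le : ∀ y, {A ∈ 𝒰 | y ∈ A}.encard ≤ n

namespace IsSmallOpenFamily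

variable {R R' : ℝ} {n n' : ℕ} {𝒰 𝒱 : Set (Set X)}

lemma empty (R : ℝ) (n : ℕ) : IsSmallOpenFamily R n (∅ : Set (Set X)) := by
  constructor <;> simp

lemma mono_radius (h : IsSmallOpenFamily R n 𝒰) (hR : R ≤ R') : IsSmallOpenFamily R' n 𝒰 where
  __ := h
  subset_closedBall A hA :=
    (h.subset_closedBall A hA).imp fun _ hc => hc.trans (closedBall_subset_closedBall hR)

lemma union (h : IsSmallOpenFamily R n 𝒰) (h' : IsSmallOpenFamily R n' 𝒱) :
    IsSmallOpenFamily R (n + n') (𝒰 ∪ 𝒱) where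
  finite := h.finite.union h'.finite
  isOpen _ hA := hA.elim (h.isOpen _) (h'.isOpen _)
  subset_closedBall _ hA := hA.elim (h.subset_closedBall _) (h'.subset_closedBall _)
  encard_le y := by
    have hsep : {A ∈ 𝒰 ∪ 𝒱 | y ∈ A} = {A ∈ 𝒰 | y ∈ A} ∪ {A ∈ 𝒱 | y ∈ A} := by
      ext A
      simp only [mem_ofPred_eq, mem_union, or_and_right]
    rw [hsep, Nat.cast_add]
    exact (encard_union_le _ _).trans (add_le_add (h.encard_le y) (h'.encard_le y))

lemma isOpen_sUnion (h : IsSmallOpenFamily R n 𝒰) : IsOpen (⋃₀ 𝒰) :=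
  _root_.isOpen_sUnion h.isOpen

lemma cutAlong (h : IsSmallOpenFamily R n 𝒰) (hn : 1 ≤ n) {V : Set X} (hV : IsOpen V)
    (hVR : ∃ c, V ⊆ closedBall c R) :
    IsSmallOpenFamily R n (insert V ((· \ closure V) '' 𝒰)) where
  finite := (h.finite.image _).insert _
  isOpen := forall_mem_insert.2 ⟨hV, forall_mem_image.2 fun A hA =>
    (h.isOpen A hA).sdiff isClosed_closure⟩
  subset_closedBall := forall_mem_insert.2 ⟨hVR, forall_mem_image.2 fun A hA =>
    (h.subset_closedBall A hA).imp fun _ hc => sdiff_subset.trans hc⟩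
  encard_le y := by
    by_cases hy : y ∈ V
    · have hsub : {A ∈ insert V ((· \ closure V) '' 𝒰) | y ∈ A} ⊆ {V} := by
        rintro _ ⟨rfl | ⟨A, -, rfl⟩, hyA⟩
        · rfl
        · exact absurd (subset_closure hy) hyA.2
      exact (encard_le_encard hsub).trans (by simpa using hn)
    · have hsub : {A ∈ insert V ((· \ closure V) '' 𝒰) | y ∈ A} ⊆
          (· \ closure V) '' {A ∈ 𝒰 | y ∈ A} := by
        rintro _ ⟨rfl | ⟨A, hA, rfl⟩, hyA⟩
        · exact absurd hyA hy
        · exact mem_image_of_mem _ ⟨hA, hyA.1⟩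
      exact (encard_le_encard hsub).trans ((encard_image_le _ _).trans (h.encard_le y))

lemma exists_fin (h : IsSmallOpenFamily R n 𝒰) :
    ∃ (k : ℕ) (U : Fin k → Set X), range U = 𝒰 ∧ ∀ y, {i | y ∈ U i}.encard ≤ n := by
  have := h.finite.to_subtype
  obtain ⟨k, ⟨e⟩⟩ := Finite.exists_equiv_fin 𝒰
  refine ⟨k, fun i => e.symm i, by simp [← Function.comp_def, range_comp], fun y => ?_⟩
  refine le_trans (encard_le_encard_of_injOn (f := fun i => (e.symm i : Set X)) ?_ ?_)
    (h.encard_le y)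
  · exact fun i hi => ⟨(e.symm i).2, hi⟩
  · exact (Subtype.val_injective.comp e.symm.injective).injOn

end IsSmallOpenFamily

/-- The set `K` is covered by the pairwise disjoint open *pieces* in `𝒰`, of radius at most `R`,
together with the closed balls in `F`, of radius at most `b`. As in `HC`, a ball is recorded as the
pair of its centre and its radius; disjointness is encoded as multiplicity at most `1`. -/
structure IsCut (K : Set X) (b : ℝ≥0) (R : ℝ) (F : Finset (X × ℝ≥0)) (𝒰 : Set (Set X)) :
    Prop where
  pieces : IsSmallOpenFamily R 1 𝒰
  radius_le : ∀ p ∈ F, p.2 ≤ b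
  subset : K ⊆ ⋃₀ 𝒰 ∪ ⋃ p ∈ F, closedBall p.1 (p.2 : ℝ)

variable {K : Set X} {b : ℝ≥0} {R ρ s : ℝ}

lemma exists_isCut (hK : TotallyBounded K) (hb : b ≠ 0) (R : ℝ) : ∃ F 𝒰, IsCut K b R F 𝒰 := by
  classical
  obtain ⟨T, hT, hKT⟩ := totallyBounded_iff.1 hK b (NNReal.coe_pos.2 (pos_iff_ne_zero.2 hb))
  refine ⟨hT.toFinset.image fun x => (x, b), ∅, .empty R 1, by simp, ?_⟩
  rw [Finset.set_biUnion_finset_image, sUnion_empty, empty_union]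
  simpa using hKT.trans (iUnion₂_mono fun _ _ => ball_subset_closedBall)

lemma exists_forall_le_add {ι : Type*} [Nonempty ι] (f : ι → ℝ≥0∞) {δ : ℝ≥0∞} (hδ : δ ≠ 0) :
    ∃ i, ∀ j, f i ≤ f j + δ := by
  by_cases htop : ⨅ i, f i = ∞
  · exact ⟨Classical.arbitrary ι, fun j => by simp [iInf_eq_top.1 htop j]⟩
  · obtain ⟨i, hi⟩ := iInf_lt_iff.1 (ENNReal.lt_add_right htop hδ)
    exact ⟨i, fun j => hi.le.trans (by gcongr; exact iInf_le f j)⟩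

lemma exists_isCut_forall_sum_le_add (hK : TotallyBounded K) (hb : b ≠ 0) (R m : ℝ) {δ : ℝ≥0∞}
    (hδ : δ ≠ 0) :
    ∃ F 𝒰, IsCut K b R F 𝒰 ∧ ∀ F' 𝒰', IsCut K b R F' 𝒰' →
      ∑ p ∈ F, (p.2 : ℝ≥0∞) ^ m ≤ ∑ p ∈ F', (p.2 : ℝ≥0∞) ^ m + δ := by
  obtain ⟨F₀, 𝒰₀, h₀⟩ := exists_isCut hK hb R
  have : Nonempty {q : Finset (X × ℝ≥0) × Set (Set X) // IsCut K b R q.1 q.2} :=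
    ⟨⟨(F₀, 𝒰₀), h₀⟩⟩
  obtain ⟨⟨⟨F, 𝒰⟩, h⟩, hmin⟩ := exists_forall_le_add
    (fun q : {q : Finset (X × ℝ≥0) × Set (Set X) // IsCut K b R q.1 q.2} =>
      ∑ p ∈ q.1.1, (p.2 : ℝ≥0∞) ^ m) hδ
  exact ⟨F, 𝒰, h, fun F' 𝒰' h' => hmin ⟨(F', 𝒰'), h'⟩⟩

namespace IsCut

variable {F G : Finset (X × ℝ≥0)} {𝒰 : Set (Set X)}

open scoped Classical in
lemma cutSphere (h : IsCut K b R F 𝒰) {x : X} (hs : ρ + 2 * b ≤ s) (hsR : s ≤ R)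
    (hGb : ∀ p ∈ G, p.2 ≤ b) (hG : K ∩ sphere x s ⊆ ⋃ p ∈ G, closedBall p.1 (p.2 : ℝ)) :
    IsCut K b R
      ({p ∈ F | ¬(closedBall p.1 (p.2 : ℝ) ∩ closedBall x ρ).Nonempty} ∪
        {p ∈ G | (closedBall p.1 (p.2 : ℝ) ∩ sphere x s).Nonempty})
      (insert (ball x s) ((· \ closure (ball x s)) '' 𝒰)) where
  pieces := h.pieces.cutAlong le_rfl isOpen_ball
    ⟨x, ball_subset_closedBall.trans (closedBall_subset_closedBall hsR)⟩
  radius_le p hp := (Finset.mem_union.1 hp).elim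
    (fun hp => h.radius_le p (Finset.mem_filter.1 hp).1) fun hp => hGb p (Finset.mem_filter.1 hp).1
  subset y hy := by
    rcases lt_trichotomy (dist y x) s with hlt | heq | hgt
    · exact .inl ⟨_, mem_insert _ _, hlt⟩
    · obtain ⟨p, hp, hyp⟩ := mem_iUnion₂.1 (hG ⟨hy, heq⟩)
      exact .inr (mem_iUnion₂.2 ⟨p, Finset.mem_union_right _
        (Finset.mem_filter.2 ⟨hp, y, hyp, heq⟩), hyp⟩)
    · rcases h.subset hy with ⟨A, hA, hyA⟩ | hyF
      · have hy' : y ∉ closure (ball x s) := fun hyc =>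
          hgt.not_ge (closure_ball_subset_closedBall hyc)
        exact .inl ⟨_, mem_insert_of_mem _ (mem_image_of_mem _ hA), hyA, hy'⟩
      · obtain ⟨p, hp, hyp⟩ := mem_iUnion₂.1 hyF
        refine .inr (mem_iUnion₂.2 ⟨p, Finset.mem_union_left _
          (Finset.mem_filter.2 ⟨hp, ?_⟩), hyp⟩)
        rintro ⟨z, hzp, hzx⟩
        have hpb : (p.2 : ℝ) ≤ b := h.radius_le p hp
        rw [mem_closedBall] at hyp hzp hzx
        linarith [dist_triangle_right y z p.1, dist_triangle y z x]

open scoped Classical in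
lemma diff_inter_subset (h : IsCut K b R F 𝒰) (B : Set X) :
    (K \ ⋃₀ 𝒰) ∩ B ⊆
      ⋃ p ∈ {p ∈ F | (closedBall p.1 (p.2 : ℝ) ∩ B).Nonempty}, closedBall p.1 (p.2 : ℝ) := by
  rintro y ⟨⟨hyK, hy𝒰⟩, hyB⟩
  obtain ⟨p, hp, hyp⟩ := mem_iUnion₂.1 ((h.subset hyK).resolve_left hy𝒰)
  exact mem_iUnion₂.2 ⟨p, Finset.mem_filter.2 ⟨hp, y, hyp, hyB⟩, hyp⟩

open scoped Classical in
lemma sum_filter_inter_closedBall_le (h : IsCut K b R F 𝒰) {m : ℝ} (hm : 0 ≤ m) (hb : b ≠ 0)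
    {δ : ℝ≥0∞}
    (hmin : ∀ F' 𝒰', IsCut K b R F' 𝒰' →
      ∑ p ∈ F, (p.2 : ℝ≥0∞) ^ m ≤ ∑ p ∈ F', (p.2 : ℝ≥0∞) ^ m + δ)
    {x : X} (hρ : ρ + 4 * b ≤ R) (hGb : ∀ p ∈ G, p.2 ≤ b)
    (hG : K ∩ closedBall x R ⊆ ⋃ p ∈ G, closedBall p.1 (p.2 : ℝ)) :
    ∑ p ∈ F with (closedBall p.1 (p.2 : ℝ) ∩ closedBall x ρ).Nonempty, (p.2 : ℝ≥0∞) ^ m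
      ≤ (∑ p ∈ G, (p.2 : ℝ≥0∞) ^ (m + 1)) / b + δ := by
  obtain ⟨s, ⟨hρs, hsρ⟩, hs⟩ := exists_sum_filter_inter_sphere_le hm hb G x (ρ + 2 * b)
  have hsR : s ≤ R := by linarith
  have hGs : K ∩ sphere x s ⊆ ⋃ p ∈ G, closedBall p.1 (p.2 : ℝ) := fun y hy =>
    hG ⟨hy.1, closedBall_subset_closedBall hsR (sphere_subset_closedBall hy.2)⟩
  set near := {p ∈ F | (closedBall p.1 (p.2 : ℝ) ∩ closedBall x ρ).Nonempty}
  set far := {p ∈ F | ¬(closedBall p.1 (p.2 : ℝ) ∩ closedBall x ρ).Nonempty}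
  set crossing := {p ∈ G | (closedBall p.1 (p.2 : ℝ) ∩ sphere x s).Nonempty}
  have hfar : ∑ p ∈ far, (p.2 : ℝ≥0∞) ^ m ≠ ∞ :=
    ENNReal.sum_ne_top.2 fun _ _ => ENNReal.rpow_ne_top_of_nonneg hm ENNReal.coe_ne_top
  refine (ENNReal.add_le_add_iff_left hfar).1 ?_
  calc ∑ p ∈ far, (p.2 : ℝ≥0∞) ^ m + ∑ p ∈ near, (p.2 : ℝ≥0∞) ^ m
      = ∑ p ∈ F, (p.2 : ℝ≥0∞) ^ m := by
        rw [add_comm, Finset.sum_filter_add_sum_filter_not]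
    _ ≤ ∑ p ∈ far ∪ crossing, (p.2 : ℝ≥0∞) ^ m + δ := hmin _ _ (h.cutSphere hρs hsR hGb hGs)
    _ ≤ ∑ p ∈ far, (p.2 : ℝ≥0∞) ^ m + ∑ p ∈ crossing, (p.2 : ℝ≥0∞) ^ m + δ := by
        gcongr
        exact le_self_add.trans_eq Finset.sum_union_inter
    _ ≤ ∑ p ∈ far, (p.2 : ℝ≥0∞) ^ m + ((∑ p ∈ G, (p.2 : ℝ≥0∞) ^ (m + 1)) / b + δ) := by
        rw [add_assoc]
        gcongr

end IsCut

end Cutting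

section LocalTheorem

variable {X : Type*} [MetricSpace X] {K : Set X} {b : ℝ≥0}

lemma IsCut.HC_diff_inter_closedBall_le {R ρ : ℝ} {F : Finset (X × ℝ≥0)} {𝒰 : Set (Set X)}
    (h : IsCut K b R F 𝒰) (hK : IsCompact K) {m : ℝ} (hm : 0 ≤ m) (hb : b ≠ 0) {δ : ℝ≥0∞}
    (hmin : ∀ F' 𝒰', IsCut K b R F' 𝒰' →
      ∑ p ∈ F, (p.2 : ℝ≥0∞) ^ m ≤ ∑ p ∈ F', (p.2 : ℝ≥0∞) ^ m + δ)
    {x : X} (hρ : ρ + 4 * b ≤ R) {c : ℝ≥0∞} (hcb : c ≤ (b : ℝ≥0∞) ^ (m + 1))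
    (hc : HC (m + 1) (K ∩ closedBall x R) < c) :
    HC m ((K \ ⋃₀ 𝒰) ∩ closedBall x ρ) ≤ c / b + δ := by
  classical
  obtain ⟨G, hG, hGc⟩ := exists_finset_cover_of_HC_lt (hK.inter_right isClosed_closedBall) hc
  have hGb (p) (hp : p ∈ G) : p.2 ≤ b := by
    have hpb : (p.2 : ℝ≥0∞) ^ (m + 1) ≤ (b : ℝ≥0∞) ^ (m + 1) :=
      (Finset.single_le_sum_of_canonicallyOrdered (f := fun p => (p.2 : ℝ≥0∞) ^ (m + 1)) hp).trans
        (hGc.le.trans hcb)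
    exact ENNReal.coe_le_coe.1 ((ENNReal.rpow_le_rpow_iff (by positivity)).1 hpb)
  calc HC m ((K \ ⋃₀ 𝒰) ∩ closedBall x ρ)
      ≤ ∑ p ∈ F with (closedBall p.1 (p.2 : ℝ) ∩ closedBall x ρ).Nonempty, (p.2 : ℝ≥0∞) ^ m :=
        HC_le_sum m (h.diff_inter_subset _)
    _ ≤ (∑ p ∈ G, (p.2 : ℝ≥0∞) ^ (m + 1)) / b + δ :=
        h.sum_filter_inter_closedBall_le hm hb hmin hρ hGb hG
    _ ≤ c / b + δ := by gcongr

lemma eq_empty_of_HC_zero_lt_one {A : Set X} (hA : IsCompact A) (h : HC 0 A < 1) : A = ∅ := by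
  obtain ⟨F, hAF, hF⟩ := exists_finset_cover_of_HC_lt hA h
  have hF₀ : F = ∅ := by simpa using hF
  simpa [hF₀] using hAF

lemma exists_isCut_HC_diff_inter_closedBall_le (hK : IsCompact K) {m : ℝ} (hm : 0 ≤ m) {R ρ : ℝ}
    (hρ : ρ + 4 * b ≤ R) {v : ℝ≥0∞} (hv : v < (b : ℝ≥0∞) ^ (m + 1))
    (h : ∀ x ∈ K, HC (m + 1) (K ∩ closedBall x R) ≤ v) :
    ∃ F 𝒰, IsCut K b R F 𝒰 ∧
      ∃ w < (b : ℝ≥0∞) ^ m, ∀ x ∈ K, HC m ((K \ ⋃₀ 𝒰) ∩ closedBall x ρ) ≤ w := by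
  have hb : b ≠ 0 := by
    rintro rfl
    simp [ENNReal.zero_rpow_of_pos (add_pos_of_nonneg_of_pos hm one_pos)] at hv
  obtain ⟨c, hvc, hcb⟩ := exists_between hv
  have hcb' : c / b < (b : ℝ≥0∞) ^ m := by
    refine ENNReal.div_lt_of_lt_mul ?_
    rwa [ENNReal.rpow_add_of_nonneg _ _ hm zero_le_one, ENNReal.rpow_one] at hcb
  obtain ⟨w, hcw, hwb⟩ := exists_between hcb'
  obtain ⟨F, 𝒰, hcut, hmin⟩ :=
    exists_isCut_forall_sum_le_add hK.totallyBounded hb R m (tsub_pos_of_lt hcw).ne'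
  refine ⟨F, 𝒰, hcut, w, hwb, fun x hx => ?_⟩
  exact (hcut.HC_diff_inter_closedBall_le hK hm hb hmin hρ hcb.le ((h x hx).trans_lt hvc)).trans_eq
    (add_tsub_cancel_of_le hcw.le)

lemma exists_isSmallOpenFamily_of_HC_inter_closedBall_le {n : ℕ} (hK : IsCompact K) {v : ℝ≥0∞}
    (hv : v < (b : ℝ≥0∞) ^ (n : ℝ)) (h : ∀ x ∈ K, HC n (K ∩ closedBall x (4 * n * b)) ≤ v) :
    ∃ 𝒱, IsSmallOpenFamily (4 * n * b) n 𝒱 ∧ K ⊆ ⋃₀ 𝒱 := by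
  induction n generalizing K v with
  | zero =>
    refine ⟨∅, .empty _ _, fun x hx => ?_⟩
    simp only [Nat.cast_zero, ENNReal.rpow_zero] at hv h
    have hempty := eq_empty_of_HC_zero_lt_one (hK.inter_right isClosed_closedBall)
      ((h x hx).trans_lt hv)
    exact absurd hempty (Nonempty.ne_empty ⟨x, hx, by simp⟩)
  | succ n ih =>
    have hR : 4 * n * b + 4 * b = 4 * (n + 1 : ℕ) * (b : ℝ) := by push_cast; ring
    simp only [Nat.cast_succ] at hv h hR ⊢
    obtain ⟨F, 𝒰, hcut, w, hw, hZ⟩ :=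
      exists_isCut_HC_diff_inter_closedBall_le hK n.cast_nonneg hR.le hv h
    obtain ⟨𝒱, h𝒱, hZ𝒱⟩ := ih (hK.diff hcut.pieces.isOpen_sUnion) hw fun x hx => hZ x hx.1
    refine ⟨𝒱 ∪ 𝒰, (h𝒱.mono_radius ?_).union hcut.pieces, ?_⟩
    · rw [← hR]
      exact le_add_of_nonneg_right (by positivity)
    · rw [sUnion_union]
      exact (sdiff_subset_iff.1 hZ𝒱).trans_eq (union_comm _ _)

end LocalTheorem

theorem stmt1_general {X : Type*} [MetricSpace X] {K : Set X} (hK : IsCompact K)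
    (n : ℕ) (hn : 1 ≤ n) (t : ℝ) {v : ℝ≥0∞}
    (hv : (4 * n : ℝ≥0∞) * v ^ ((n : ℝ)⁻¹) < ENNReal.ofReal t)
    (h : ∀ x ∈ K, HC (n : ℝ) (K ∩ closedBall x t) ≤ v) :
    ∃ (k : ℕ) (U : Fin k → Set X),
      (∀ i, IsOpen (U i)) ∧ (∀ x ∈ K, ∃ i, x ∈ U i) ∧
      (∀ i, ∃ c : X, U i ⊆ Metric.closedBall c t) ∧
      (∀ x : X, {i | x ∈ U i}.encard ≤ n) := by
  obtain ⟨b, rfl⟩ : ∃ b : ℝ≥0, 4 * n * (b : ℝ) = t := by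
    have ht : 0 < t := ENNReal.ofReal_pos.1 (zero_le.trans_lt hv)
    refine ⟨(t / (4 * n)).toNNReal, ?_⟩
    rw [Real.coe_toNNReal _ (by positivity)]
    field_simp
  have hvb : v < (b : ℝ≥0∞) ^ (n : ℝ) := by
    rw [← ENNReal.rpow_inv_lt_iff (by positivity)]
    refine lt_of_mul_lt_mul_left' (hv.trans_eq ?_)
    rw [ENNReal.ofReal_mul (by positivity), ENNReal.ofReal_mul zero_le_four]
    simp
  obtain ⟨𝒱, h𝒱, hK𝒱⟩ := exists_isSmallOpenFamily_of_HC_inter_closedBall_le hK hvb h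
  obtain ⟨k, U, rfl, hU⟩ := h𝒱.exists_fin
  exact ⟨k, U, forall_mem_range.1 h𝒱.isOpen, fun x hx => by simpa using hK𝒱 hx,
    fun i => h𝒱.subset_closedBall _ (mem_range_self i), hU⟩

/-- For a compact metric space `X` and integer `n ≥ 1`, `UR_{n-1}(X) ≤ 4n·HC_n(X)^{1/n}`:
for every `t` with `4n·HC_n(X)^{1/n} < t` there is a finite open covering of `X` by sets
contained in closed balls of radius `t` with multiplicity at most `n`. -/
theorem stmt1 {X : Type*} [MetricSpace X] [CompactSpace X]
    (n : ℕ) (hn : 1 ≤ n) (t : ℝ)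
    (ht : (4 * n : ℝ≥0∞) * HC (n : ℝ) (Set.univ : Set X) ^ ((n : ℝ)⁻¹) < ENNReal.ofReal t) :
    ∃ (k : ℕ) (U : Fin k → Set X),
      (∀ i, IsOpen (U i)) ∧ (∀ x : X, ∃ i, x ∈ U i) ∧
      (∀ i, ∃ c : X, U i ⊆ Metric.closedBall c t) ∧
      (∀ x : X, {i | x ∈ U i}.encard ≤ n) := by
  simpa using stmt1_general isCompact_univ n hn t ht fun x _ => HC_mono n (subset_univ _)
end

section
/- Let X be a compact metric space and n ≥ 1 an integer. Then UW_{n−1}(X) ≤ 8n·HC_n(X)^{1/n}; that is, for every ε > 0 there exists a finite covering of X by open sets, each of diameter at most 8n·HC_n(X)^{1/n} + ε, such that no n+1 of the covering sets have a common point. -/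
open Metric Set
open scoped ENNReal NNReal

/-!
Fix `ρ` with `HC n K < ρ ^ n`. By compactness `K` is covered by a finite family `B` of open balls
whose radii satisfy `∑ r ^ n < ρ ^ n`, so every radius is at most `ρ`. The cost of a set is the sum
of `r ^ k` over the balls of `B` that meet it, and `Z` is thin in dimension `k` at scale `s` if the
part of `Z` in any closed ball of radius `s` has cost less than `ρ ^ k`.

From a set `Z` that is `(k + 1)`-thin at scale `s + 4ρ` one removes disjoint open pieces, each in a
ball of radius `s + 4ρ`, chosen so that the remainder has the least possible `k`-dimensional cost.
Cutting the pieces along a sphere `S(p, t)` and adding `B(p, t)` as a new piece cannot lower this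
cost. If `t ≥ s + 2ρ`, no ball of `B` meets both `B(p, s)` and the outside of `B(p, t)`, so the part
of the remainder inside `B(p, s)` costs at most as much as `Z ∩ S(p, t)`. By the coarea inequality
(`lintegral_ballCost_inter_sphere_le`) the latter costs less than `ρ ^ k` for some
`t ∈ [s + 2ρ, s + 4ρ]`. Hence the remainder is `k`-thin at scale `s`.

The set `K` is `n`-thin at scale `4nρ`. After `n` steps the remainder is `0`-thin at scale `0`,
hence empty, and the `n` disjoint families form a covering of multiplicity at most `n` by sets of
diameter at most `8nρ`. Finally `ρ` can be taken arbitrarily close to `HC n K ^ (1 / n)`.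
-/

section BallCost

variable {X : Type*} [PseudoMetricSpace X] (B : Finset (X × ℝ≥0)) (k : ℕ)

open Classical in
/-- The `k`-dimensional cost of `A` with respect to a finite family `B` of open balls, encoded as
pairs of a centre and a radius: the sum of `r ^ k` over the balls of `B` that meet `A`. Keeping the
whole family fixed makes this a discrete substitute for the Hausdorff content of `A`. -/
noncomputable def ballCost (A : Set X) : ℝ≥0 :=
  ∑ b ∈ B with (ball b.1 b.2 ∩ A).Nonempty, b.2 ^ k

lemma finite_range_ballCost : (range (ballCost B k)).Finite := by
  classical
  refine (B.powerset.finite_toSet.image fun T => ∑ b ∈ T, b.2 ^ k).subset ?_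
  rintro _ ⟨A, rfl⟩
  exact ⟨_, Finset.mem_powerset.2 (Finset.filter_subset _ _), rfl⟩

lemma ballCost_le_sum (A : Set X) : ballCost B k A ≤ ∑ b ∈ B, b.2 ^ k := by
  classical
  exact Finset.sum_le_sum_of_subset (Finset.filter_subset _ _)

variable {B k}

lemma ballCost_mono {A A' : Set X} (h : A ⊆ A') : ballCost B k A ≤ ballCost B k A' := by
  classical
  exact Finset.sum_le_sum_of_subset <| Finset.monotone_filter_right _ fun b _ hb =>
    hb.mono (inter_subset_inter_right _ h)

lemma ballCost_union_le (A A' : Set X) :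
    ballCost B k (A ∪ A') ≤ ballCost B k A + ballCost B k A' := by
  classical
  simp only [ballCost, inter_union_distrib_left, union_nonempty, Finset.filter_or]
  rw [← Finset.sum_union_inter]
  exact le_self_add

lemma ballCost_add_le_of_not_meets_both {A A' R : Set X} (hA : A ⊆ R) (hA' : A' ⊆ R)
    (h : ∀ b ∈ B, (ball b.1 b.2 ∩ A).Nonempty → ¬ (ball b.1 (b.2 : ℝ) ∩ A').Nonempty) :
    ballCost B k A + ballCost B k A' ≤ ballCost B k R := by
  classical
  rw [ballCost, ballCost, ← Finset.sum_union (Finset.disjoint_filter.2 h), ← Finset.filter_or]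
  refine Finset.sum_le_sum_of_subset <| Finset.monotone_filter_right _ fun b _ hb => ?_
  exact hb.elim (fun hb => hb.mono (inter_subset_inter_right _ hA))
    fun hb => hb.mono (inter_subset_inter_right _ hA')

lemma ballCost_zero_lt_one_iff {A : Set X} :
    ballCost B 0 A < 1 ↔ ∀ b ∈ B, Disjoint (ball b.1 (b.2 : ℝ)) A := by
  simp only [ballCost, pow_zero, Finset.sum_const, nsmul_one, Nat.cast_lt_one,
    Finset.card_eq_zero, Finset.filter_eq_empty_iff, not_nonempty_iff_eq_empty,
    disjoint_iff_inter_eq_empty]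

open Classical in
/-- `dist · p` is `1`-Lipschitz, so a ball of radius `r` meets `sphere p t` only for `t` in an
interval of length `2 * r`. -/
lemma ballCost_inter_sphere_le (Z : Set X) (p : X) (t : ℝ) :
    (ballCost B k (Z ∩ sphere p t) : ℝ≥0∞) ≤
      ∑ b ∈ B with (ball b.1 b.2 ∩ Z).Nonempty,
        (ball (dist b.1 p) (b.2 : ℝ)).indicator (fun _ => (b.2 : ℝ≥0∞) ^ k) t := by
  simp only [indicator_apply]
  rw [ballCost, ENNReal.ofNNReal_finsetSum, ← Finset.sum_filter, Finset.filter_filter]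
  simp only [ENNReal.coe_pow]
  refine Finset.sum_le_sum_of_subset <| Finset.monotone_filter_right _ fun b _ hb => ?_
  obtain ⟨x, hxb, hxZ, rfl⟩ := hb
  exact ⟨⟨x, hxb, hxZ⟩, (abs_dist_sub_le x b.1 p).trans_lt hxb⟩

open MeasureTheory in
lemma lintegral_ballCost_inter_sphere_le (Z : Set X) (p : X) :
    ∫⁻ t : ℝ, ballCost B k (Z ∩ sphere p t) ≤ 2 * ballCost B (k + 1) Z := by
  classical
  refine (lintegral_mono (ballCost_inter_sphere_le Z p)).trans_eq ?_
  rw [lintegral_finsetSum _ fun b _ => measurable_const.indicator measurableSet_ball, ballCost,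
    ENNReal.ofNNReal_finsetSum, Finset.mul_sum]
  refine Finset.sum_congr rfl fun b _ => ?_
  rw [lintegral_indicator_const measurableSet_ball, Real.volume_ball,
    ENNReal.ofReal_mul zero_le_two, ENNReal.ofReal_ofNat, ENNReal.ofReal_coe_nnreal,
    ENNReal.coe_pow]
  ring

open MeasureTheory in
lemma exists_mem_Icc_ballCost_inter_sphere_lt {Z : Set X} (p : X) {a b : ℝ} {M : ℝ≥0}
    (h : 2 * (ballCost B (k + 1) Z : ℝ≥0∞) < M * ENNReal.ofReal (b - a)) :
    ∃ t ∈ Icc a b, ballCost B k (Z ∩ sphere p t) < M := by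
  by_contra! hM
  refine h.not_ge ?_
  calc (M : ℝ≥0∞) * ENNReal.ofReal (b - a)
      = ∫⁻ _ in Icc a b, M := by rw [setLIntegral_const, Real.volume_Icc]
    _ ≤ ∫⁻ t in Icc a b, ballCost B k (Z ∩ sphere p t) :=
        setLIntegral_mono' measurableSet_Icc fun t ht => ENNReal.coe_le_coe.2 (hM t ht)
    _ ≤ ∫⁻ t, ballCost B k (Z ∩ sphere p t) := setLIntegral_le_lintegral _ _
    _ ≤ 2 * ballCost B (k + 1) Z := lintegral_ballCost_inter_sphere_le Z p

end BallCost

/-- A finite family of pairwise disjoint open sets, each contained in a closed ball of radius `s`: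
the sets that a single separation step may remove. -/
structure IsPieceFamily {X : Type*} [PseudoMetricSpace X] (s : ℝ≥0) (𝒱 : Set (Set X)) : Prop where
  finite : 𝒱.Finite
  isOpen : ∀ V ∈ 𝒱, IsOpen V
  exists_subset_closedBall : ∀ V ∈ 𝒱, ∃ p, V ⊆ closedBall p s
  pairwiseDisjoint : 𝒱.PairwiseDisjoint id

/-- The family obtained from `𝒱` by replacing everything inside the closed ball of radius `t`
around `p` by the open ball, so that only the sphere becomes uncovered. -/
def cutFamily {X : Type*} [PseudoMetricSpace X] (𝒱 : Set (Set X)) (p : X) (t : ℝ) : Set (Set X) :=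
  insert (ball p t) ((· \ closedBall p t) '' 𝒱)

/-- `Z` is thin in dimension `k` at scale `s` for the family `B` of balls and the bound `ρ`: its
part in any closed ball of radius `s` has `k`-dimensional cost less than `ρ ^ k`. -/
def IsThin {X : Type*} [PseudoMetricSpace X] (B : Finset (X × ℝ≥0)) (ρ : ℝ≥0) (k : ℕ) (s : ℝ≥0)
    (Z : Set X) : Prop :=
  ∀ p, ballCost B k (Z ∩ closedBall p s) < ρ ^ k

section Separation

variable {X : Type*} [PseudoMetricSpace X] {𝒱 : Set (Set X)} {B : Finset (X × ℝ≥0)} {k : ℕ}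
  {ρ s : ℝ≥0} {Z : Set X}

lemma isPieceFamily_empty : IsPieceFamily s (∅ : Set (Set X)) where
  finite := finite_empty
  isOpen := by simp
  exists_subset_closedBall := by simp
  pairwiseDisjoint := pairwiseDisjoint_empty

lemma pairwiseDisjoint_cutFamily (h : 𝒱.PairwiseDisjoint id) (p : X) (t : ℝ) :
    (cutFamily 𝒱 p t).PairwiseDisjoint id := by
  have ball_disjoint (V : Set X) : Disjoint (ball p t) (V \ closedBall p t) :=
    disjoint_sdiff_right.mono_left ball_subset_closedBall
  rintro _ (rfl | ⟨V, hV, rfl⟩) _ (rfl | ⟨W, hW, rfl⟩) hne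
  · exact absurd rfl hne
  · exact ball_disjoint W
  · exact (ball_disjoint V).symm
  · exact (h hV hW fun hVW => hne (by rw [hVW])).mono sdiff_subset sdiff_subset

lemma IsPieceFamily.cutFamily (h : IsPieceFamily s 𝒱) (p : X) {t : ℝ} (ht : t ≤ s) :
    IsPieceFamily s (cutFamily 𝒱 p t) where
  finite := (h.finite.image _).insert _
  isOpen := by
    rintro _ (rfl | ⟨V, hV, rfl⟩)
    exacts [isOpen_ball, (h.isOpen V hV).sdiff isClosed_closedBall]
  exists_subset_closedBall := by
    rintro _ (rfl | ⟨V, hV, rfl⟩)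
    · exact ⟨p, ball_subset_closedBall.trans (closedBall_subset_closedBall ht)⟩
    · exact (h.exists_subset_closedBall V hV).imp fun _ => sdiff_subset.trans
  pairwiseDisjoint := pairwiseDisjoint_cutFamily h.pairwiseDisjoint p t

lemma sdiff_sUnion_cutFamily_subset (Z : Set X) (𝒱 : Set (Set X)) (p : X) (t : ℝ) :
    Z \ ⋃₀ cutFamily 𝒱 p t ⊆ Z ∩ sphere p t ∪ (Z \ ⋃₀ 𝒱) \ closedBall p t := by
  rintro x ⟨hxZ, hx⟩
  have hxt : t ≤ dist x p := not_lt.1 fun hlt => hx ⟨_, mem_insert _ _, hlt⟩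
  rcases hxt.eq_or_lt with heq | hlt
  · exact Or.inl ⟨hxZ, heq.symm⟩
  · refine Or.inr ⟨⟨hxZ, ?_⟩, hlt.not_ge⟩
    rintro ⟨V, hV, hxV⟩
    exact hx ⟨_, mem_insert_of_mem _ (mem_image_of_mem _ hV), hxV, hlt.not_ge⟩

lemma exists_isPieceFamily_ballCost_sdiff_le (B : Finset (X × ℝ≥0)) (k : ℕ) (s : ℝ≥0)
    (Z : Set X) :
    ∃ 𝒱, IsPieceFamily s 𝒱 ∧ ∀ 𝒲, IsPieceFamily s 𝒲 →
      ballCost B k (Z \ ⋃₀ 𝒱) ≤ ballCost B k (Z \ ⋃₀ 𝒲) := by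
  let costs := (fun 𝒱 => ballCost B k (Z \ ⋃₀ 𝒱)) '' {𝒱 | IsPieceFamily s 𝒱}
  have hfin : costs.Finite :=
    (finite_range_ballCost B k).subset <| image_subset_iff.2 fun 𝒱 _ => mem_range_self _
  obtain ⟨_, ⟨𝒱, h𝒱, rfl⟩, hmin⟩ :=
    costs.exists_min_image id hfin ⟨_, mem_image_of_mem _ isPieceFamily_empty⟩
  exact ⟨𝒱, h𝒱, fun 𝒲 h𝒲 => hmin _ (mem_image_of_mem _ h𝒲)⟩

lemma ballCost_inter_closedBall_add_sdiff_le (hρ : ∀ b ∈ B, b.2 ≤ ρ) (R : Set X) (p : X) {t : ℝ}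
    (ht : s + 2 * ρ ≤ t) :
    ballCost B k (R ∩ closedBall p s) + ballCost B k (R \ closedBall p t) ≤ ballCost B k R := by
  refine ballCost_add_le_of_not_meets_both inter_subset_left sdiff_subset ?_
  rintro ⟨c, r⟩ hb ⟨x, hxc, -, hxp⟩ ⟨y, hyc, -, hyp⟩
  have hr : (r : ℝ) ≤ ρ := hρ _ hb
  simp only [mem_ball, mem_closedBall, not_le] at hxc hxp hyc hyp
  linarith [dist_triangle4_right y p c x, dist_triangle y c p, dist_triangle c x p, dist_comm c x]

lemma ballCost_remainder_inter_closedBall_le (hρ : ∀ b ∈ B, b.2 ≤ ρ)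
    {p : X} {t : ℝ} (ht : s + 2 * ρ ≤ t)
    (hcut : ballCost B k (Z \ ⋃₀ 𝒱) ≤ ballCost B k (Z \ ⋃₀ cutFamily 𝒱 p t)) :
    ballCost B k ((Z \ ⋃₀ 𝒱) ∩ closedBall p s) ≤ ballCost B k (Z ∩ sphere p t) := by
  set R := Z \ ⋃₀ 𝒱
  have hsphere : ballCost B k R ≤
      ballCost B k (Z ∩ sphere p t) + ballCost B k (R \ closedBall p t) :=
    calc ballCost B k R
        ≤ ballCost B k (Z \ ⋃₀ cutFamily 𝒱 p t) := hcut
      _ ≤ ballCost B k (Z ∩ sphere p t ∪ R \ closedBall p t) :=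
          ballCost_mono (sdiff_sUnion_cutFamily_subset Z 𝒱 p t)
      _ ≤ _ := ballCost_union_le _ _
  exact le_of_add_le_add_right
    ((ballCost_inter_closedBall_add_sdiff_le hρ R p ht).trans hsphere)

lemma IsThin.exists_ballCost_inter_sphere_lt (hZ : IsThin B ρ (k + 1) (s + 4 * ρ) Z) (p : X) :
    ∃ t ∈ Icc (s + 2 * ρ : ℝ) (s + 4 * ρ), ballCost B k (Z ∩ sphere p t) < ρ ^ k := by
  have hlength : ((ρ ^ k : ℝ≥0) : ℝ≥0∞) * ENNReal.ofReal (s + 4 * ρ - (s + 2 * ρ)) =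
      2 * ((ρ ^ (k + 1) : ℝ≥0) : ℝ≥0∞) := by
    rw [show (s + 4 * ρ - (s + 2 * ρ) : ℝ) = ((2 * ρ : ℝ≥0) : ℝ) by push_cast; ring,
      ENNReal.ofReal_coe_nnreal]
    push_cast
    ring
  have hcost : 2 * (ballCost B (k + 1) (Z ∩ closedBall p (s + 4 * ρ : ℝ≥0)) : ℝ≥0∞) <
      (ρ ^ k : ℝ≥0) * ENNReal.ofReal (s + 4 * ρ - (s + 2 * ρ)) := by
    rw [hlength]
    exact_mod_cast mul_lt_mul_of_pos_left (hZ p) two_pos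
  obtain ⟨t, ht, hlt⟩ := exists_mem_Icc_ballCost_inter_sphere_lt p hcost
  refine ⟨t, ht, (ballCost_mono ?_).trans_lt hlt⟩
  rintro x ⟨hxZ, hx⟩
  refine ⟨⟨hxZ, sphere_subset_closedBall.trans (closedBall_subset_closedBall ?_) hx⟩, hx⟩
  exact_mod_cast ht.2

lemma IsThin.exists_isPieceFamily_isThin_sdiff (hZ : IsThin B ρ (k + 1) (s + 4 * ρ) Z)
    (hρ : ∀ b ∈ B, b.2 ≤ ρ) :
    ∃ 𝒱, IsPieceFamily (s + 4 * ρ) 𝒱 ∧ IsThin B ρ k s (Z \ ⋃₀ 𝒱) := by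
  obtain ⟨𝒱, h𝒱, hmin⟩ := exists_isPieceFamily_ballCost_sdiff_le B k (s + 4 * ρ) Z
  refine ⟨𝒱, h𝒱, fun p => ?_⟩
  obtain ⟨t, ht, hlt⟩ := hZ.exists_ballCost_inter_sphere_lt p
  have hcut := hmin _ (h𝒱.cutFamily p (by exact_mod_cast ht.2))
  exact (ballCost_remainder_inter_closedBall_le hρ ht.1 hcut).trans_lt hlt

lemma IsThin.eq_empty (hZ : IsThin B ρ 0 s Z) (hB : Z ⊆ ⋃ b ∈ B, ball b.1 b.2) : Z = ∅ := by
  refine eq_empty_of_forall_notMem fun p hp => ?_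
  obtain ⟨b, hb, hpb⟩ := mem_iUnion₂.1 (hB hp)
  have hdisj := ballCost_zero_lt_one_iff.1 (by simpa only [pow_zero] using hZ p) b hb
  exact hdisj.le_bot ⟨hpb, hp, mem_closedBall_self s.2⟩

end Separation

/-- `𝒰` is a finite covering of `A` by open sets of diameter at most `t` with multiplicity at most
`n`, so that it witnesses `UW_{n-1}(A) ≤ t`. -/
structure IsWidthCover {X : Type*} [PseudoMetricSpace X] (A : Set X) (n : ℕ) (t : ℝ≥0∞)
    (𝒰 : Set (Set X)) : Prop where
  finite : 𝒰.Finite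
  isOpen : ∀ U ∈ 𝒰, IsOpen U
  ediam_le : ∀ U ∈ 𝒰, ediam U ≤ t
  subset_sUnion : A ⊆ ⋃₀ 𝒰
  encard_le : ∀ x, {U ∈ 𝒰 | x ∈ U}.encard ≤ n

section WidthCover

variable {X : Type*} [PseudoMetricSpace X] {A A' : Set X} {m n : ℕ} {t t' : ℝ≥0∞}
  {𝒰 𝒲 : Set (Set X)}

lemma isWidthCover_empty (t : ℝ≥0∞) : IsWidthCover (∅ : Set X) 0 t ∅ where
  finite := finite_empty
  isOpen := by simp
  ediam_le := by simp
  subset_sUnion := empty_subset _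
  encard_le := by simp

lemma IsWidthCover.mono (h : IsWidthCover A n t 𝒰) (hA : A' ⊆ A) (ht : t ≤ t') :
    IsWidthCover A' n t' 𝒰 where
  __ := h
  subset_sUnion := hA.trans h.subset_sUnion
  ediam_le U hU := (h.ediam_le U hU).trans ht

lemma IsWidthCover.union (h : IsWidthCover A m t 𝒰) (h' : IsWidthCover A' n t 𝒲) :
    IsWidthCover (A ∪ A') (m + n) t (𝒰 ∪ 𝒲) where
  finite := h.finite.union h'.finite
  isOpen U hU := hU.elim (h.isOpen U) (h'.isOpen U)
  ediam_le U hU := hU.elim (h.ediam_le U) (h'.ediam_le U)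
  subset_sUnion := by
    rw [sUnion_union]
    exact union_subset_union h.subset_sUnion h'.subset_sUnion
  encard_le x := by
    have hsep : {U ∈ 𝒰 ∪ 𝒲 | x ∈ U} = {U ∈ 𝒰 | x ∈ U} ∪ {U ∈ 𝒲 | x ∈ U} :=
      union_inter_distrib_right 𝒰 𝒲 {U | x ∈ U}
    rw [hsep, Nat.cast_add]
    exact (encard_union_le _ _).trans (add_le_add (h.encard_le x) (h'.encard_le x))

lemma IsPieceFamily.isWidthCover {s : ℝ≥0} {𝒱 : Set (Set X)} (h : IsPieceFamily s 𝒱) :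
    IsWidthCover (⋃₀ 𝒱) 1 (2 * s) 𝒱 where
  finite := h.finite
  isOpen := h.isOpen
  ediam_le V hV := by
    obtain ⟨p, hp⟩ := h.exists_subset_closedBall V hV
    rw [← closedEBall_coe] at hp
    exact (ediam_mono hp).trans ediam_closedEBall_le
  subset_sUnion := subset_rfl
  encard_le x := encard_le_one_iff.2 fun V W ⟨hV, hxV⟩ ⟨hW, hxW⟩ =>
    h.pairwiseDisjoint.elim_set hV hW x hxV hxW

lemma IsWidthCover.exists_fin (h : IsWidthCover A n t 𝒰) :
    ∃ (k : ℕ) (U : Fin k → Set X), (∀ i, IsOpen (U i)) ∧ (∀ x ∈ A, ∃ i, x ∈ U i) ∧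
      (∀ i, ediam (U i) ≤ t) ∧ ∀ x, {i | x ∈ U i}.encard ≤ n := by
  obtain ⟨k, U, hU, rfl⟩ := h.finite.fin_param
  refine ⟨k, U, fun i => h.isOpen _ (mem_range_self i), fun x hx => ?_,
    fun i => h.ediam_le _ (mem_range_self i), fun x => ?_⟩
  · simpa only [sUnion_range, mem_iUnion] using h.subset_sUnion hx
  · rw [← hU.encard_image]
    refine (encard_le_encard ?_).trans (h.encard_le x)
    exact image_subset_iff.2 fun i hi => ⟨mem_range_self i, hi⟩

lemma IsThin.exists_isWidthCover {B : Finset (X × ℝ≥0)} {ρ : ℝ≥0} (hρ : ∀ b ∈ B, b.2 ≤ ρ)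
    {Z : Set X} (hZ : IsThin B ρ n (4 * n * ρ) Z) (hB : Z ⊆ ⋃ b ∈ B, ball b.1 b.2) :
    ∃ 𝒰, IsWidthCover Z n (8 * n * ρ) 𝒰 := by
  induction n generalizing Z with
  | zero => exact ⟨∅, hZ.eq_empty hB ▸ isWidthCover_empty _⟩
  | succ n ih =>
    have hscale : 4 * ((n + 1 : ℕ) : ℝ≥0) * ρ = 4 * n * ρ + 4 * ρ := by push_cast; ring
    have hdiam : (2 * (4 * n * ρ + 4 * ρ : ℝ≥0) : ℝ≥0∞) = 8 * (n + 1 : ℕ) * ρ := by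
      push_cast
      ring
    rw [hscale] at hZ
    obtain ⟨𝒱, h𝒱, hthin⟩ := hZ.exists_isPieceFamily_isThin_sdiff hρ
    obtain ⟨𝒰, h𝒰⟩ := ih hthin (sdiff_subset.trans hB)
    have h𝒰' : IsWidthCover (Z \ ⋃₀ 𝒱) n (8 * (n + 1 : ℕ) * ρ) 𝒰 :=
      h𝒰.mono subset_rfl (by gcongr; exact n.le_succ)
    have h𝒱' : IsWidthCover (⋃₀ 𝒱) 1 (8 * (n + 1 : ℕ) * ρ) 𝒱 := hdiam ▸ h𝒱.isWidthCover
    exact ⟨𝒰 ∪ 𝒱, (h𝒰'.union h𝒱').mono (subset_sdiff_union Z _) le_rfl⟩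

lemma exists_isWidthCover_of_sum_pow_lt {B : Finset (X × ℝ≥0)} {ρ : ℝ≥0}
    (hB : A ⊆ ⋃ b ∈ B, ball b.1 b.2) (hsum : ∑ b ∈ B, b.2 ^ n < ρ ^ n) :
    ∃ 𝒰, IsWidthCover A n (8 * n * ρ) 𝒰 := by
  have hradius : ∀ b ∈ B, b.2 ≤ ρ := fun b hb =>
    (lt_of_pow_lt_pow_left₀ n (zero_le : 0 ≤ ρ) <|
      (Finset.single_le_sum_of_canonicallyOrdered (f := fun b => b.2 ^ n) hb).trans_lt hsum).le
  have hthin : IsThin B ρ n (4 * n * ρ) A := fun p => (ballCost_le_sum B n _).trans_lt hsum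
  exact hthin.exists_isWidthCover hradius hB

end WidthCover

section HausdorffContent

variable {m : ℝ}

lemma exists_gt_rpow_lt {r : ℝ≥0} {c : ℝ≥0∞} (h : (r : ℝ≥0∞) ^ m < c) :
    ∃ q > r, (q : ℝ≥0∞) ^ m < c := by
  have hcont : Continuous fun q : ℝ≥0 => (q : ℝ≥0∞) ^ m :=
    ENNReal.continuous_rpow_const.comp ENNReal.continuous_coe
  have hlt := (hcont.tendsto r).eventually_lt_const h
  exact ((eventually_mem_nhdsWithin (s := Ioi r)).and
    (hlt.filter_mono nhdsWithin_le_nhds)).exists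

lemma exists_gt_tsum_rpow_lt {ι : Type*} [Countable ι] {r : ι → ℝ≥0} {c : ℝ≥0∞}
    (h : ∑' i, (r i : ℝ≥0∞) ^ m < c) :
    ∃ q : ι → ℝ≥0, (∀ i, r i < q i) ∧ ∑' i, (q i : ℝ≥0∞) ^ m < c := by
  obtain ⟨δ, hδ, hδsum⟩ := ENNReal.exists_pos_sum_of_countable (tsub_pos_of_lt h).ne' ι
  have henlarge (i : ι) : ∃ q > r i, (q : ℝ≥0∞) ^ m < (r i : ℝ≥0∞) ^ m + δ i :=
    exists_gt_rpow_lt <| ENNReal.lt_add_right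
      (ne_top_of_le_ne_top h.ne_top (ENNReal.le_tsum i)) (by exact_mod_cast (hδ i).ne')
  choose q hrq hq using henlarge
  refine ⟨q, hrq, ?_⟩
  calc ∑' i, (q i : ℝ≥0∞) ^ m
      ≤ ∑' i, ((r i : ℝ≥0∞) ^ m + δ i) := ENNReal.tsum_le_tsum fun i => (hq i).le
    _ = ∑' i, (r i : ℝ≥0∞) ^ m + ∑' i, (δ i : ℝ≥0∞) := ENNReal.tsum_add
    _ < c := lt_tsub_iff_left.1 hδsum

variable {X : Type*} [MetricSpace X] {K : Set X}

lemma exists_finset_ball_cover_of_HC_lt (hK : IsCompact K) {c : ℝ≥0∞} (h : HC m K < c) :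
    ∃ B : Finset (X × ℝ≥0),
      K ⊆ ⋃ b ∈ B, ball b.1 b.2 ∧ ∑ b ∈ B, (b.2 : ℝ≥0∞) ^ m < c := by
  classical
  simp only [HC, iInf_lt_iff] at h
  obtain ⟨S, hS, hcover, hsum⟩ := h
  have := hS.to_subtype
  obtain ⟨q, hq, hqsum⟩ := exists_gt_tsum_rpow_lt hsum
  have hopen : K ⊆ ⋃ b : S, ball b.1.1 (q b) := by
    refine hcover.trans (iUnion₂_subset fun b hb => ?_)
    exact (closedBall_subset_ball (hq ⟨b, hb⟩)).trans
      (subset_iUnion (fun b : S => ball b.1.1 (q b : ℝ)) ⟨b, hb⟩)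
  obtain ⟨T, hT⟩ := hK.elim_finite_subcover _ (fun _ => isOpen_ball) hopen
  refine ⟨T.image fun b => (b.1.1, q b), by rwa [Finset.set_biUnion_finset_image], ?_⟩
  calc ∑ b ∈ T.image fun b => (b.1.1, q b), (b.2 : ℝ≥0∞) ^ m
      ≤ ∑ b ∈ T, (q b : ℝ≥0∞) ^ m := Finset.sum_image_le_of_nonneg fun _ _ => zero_le
    _ ≤ ∑' b, (q b : ℝ≥0∞) ^ m := ENNReal.sum_le_tsum T
    _ < c := hqsum

lemma HC_ne_top_of_totallyBounded (hK : TotallyBounded K) : HC m K ≠ ∞ := by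
  obtain ⟨T, hT, hcover⟩ := totallyBounded_iff.1 hK 1 one_pos
  let S : Set (X × ℝ≥0) := (fun x => (x, 1)) '' T
  have hS : S.Finite := hT.image _
  have hKS : K ⊆ ⋃ b ∈ S, closedBall b.1 (b.2 : ℝ) := by
    rw [biUnion_image]
    exact hcover.trans (iUnion₂_mono fun x _ => ball_subset_closedBall)
  have hsum : ∑' b : S, ((b : X × ℝ≥0).2 : ℝ≥0∞) ^ m ≠ ∞ := by
    have := hS.fintype
    rw [tsum_fintype]
    refine ENNReal.sum_ne_top.2 ?_
    rintro ⟨_, x, -, rfl⟩ -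
    simp
  exact ne_top_of_le_ne_top hsum (iInf_le_of_le S (iInf₂_le_of_le hS.countable hKS le_rfl))

lemma exists_isWidthCover_of_HC_lt (hK : IsCompact K) {n : ℕ} {ρ : ℝ≥0}
    (h : HC n K < (ρ : ℝ≥0∞) ^ n) : ∃ 𝒰, IsWidthCover K n (8 * n * ρ) 𝒰 := by
  obtain ⟨B, hB, hsum⟩ := exists_finset_ball_cover_of_HC_lt hK h
  simp only [ENNReal.rpow_natCast] at hsum
  exact exists_isWidthCover_of_sum_pow_lt hB (by exact_mod_cast hsum)

end HausdorffContent

theorem stmt4_general {X : Type*} [MetricSpace X] {K : Set X} (hK : IsCompact K) (n : ℕ)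
    (hn : 1 ≤ n) :
    ∀ ε : ℝ, 0 < ε → ∃ (k : ℕ) (U : Fin k → Set X),
      (∀ i, IsOpen (U i)) ∧ (∀ x ∈ K, ∃ i, x ∈ U i) ∧
      (∀ i, ediam (U i) ≤
        (8 * n : ℝ≥0∞) * HC (n : ℝ) K ^ ((n : ℝ)⁻¹) + ENNReal.ofReal ε) ∧
      (∀ x : X, {i | x ∈ U i}.encard ≤ n) := by
  intro ε hε
  have hn₀ : (0 : ℝ) < n := by exact_mod_cast hn
  have h8n : (8 * n : ℝ≥0∞) ≠ 0 :=
    mul_ne_zero (by simp) (Nat.cast_ne_zero.2 (Nat.one_le_iff_ne_zero.1 hn))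
  have h8n' : (8 * n : ℝ≥0∞) ≠ ∞ := ENNReal.mul_ne_top (by simp) (by simp)
  have hroot : HC (n : ℝ) K ^ (n : ℝ)⁻¹ ≠ ∞ :=
    ENNReal.rpow_ne_top_of_nonneg (by positivity) (HC_ne_top_of_totallyBounded hK.totallyBounded)
  obtain ⟨ρ, hHρ, hρ⟩ := ENNReal.lt_iff_exists_nnreal_btwn.1 <|
    ENNReal.lt_add_right hroot (ENNReal.div_pos (ENNReal.ofReal_pos.2 hε).ne' h8n').ne'
  rw [ENNReal.rpow_inv_lt_iff hn₀, ENNReal.rpow_natCast] at hHρ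
  obtain ⟨𝒰, h𝒰⟩ := exists_isWidthCover_of_HC_lt hK hHρ
  refine (h𝒰.mono subset_rfl ?_).exists_fin
  calc (8 * n * ρ : ℝ≥0∞)
      ≤ 8 * n * (HC (n : ℝ) K ^ (n : ℝ)⁻¹ + ENNReal.ofReal ε / (8 * n)) := by gcongr
    _ = 8 * n * HC (n : ℝ) K ^ (n : ℝ)⁻¹ + ENNReal.ofReal ε := by
        rw [mul_add, ENNReal.mul_div_cancel h8n h8n']

/-- For a compact metric space `X` and integer `n ≥ 1`, `UW_{n-1}(X) ≤ 8n·HC_n(X)^{1/n}`: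
for every `ε > 0` there is a finite open covering of `X` by sets of diameter at most
`8n·HC_n(X)^{1/n} + ε` with multiplicity at most `n`. -/
theorem stmt4 {X : Type*} [MetricSpace X] [CompactSpace X] (n : ℕ) (hn : 1 ≤ n) :
    ∀ ε : ℝ, 0 < ε → ∃ (k : ℕ) (U : Fin k → Set X),
      (∀ i, IsOpen (U i)) ∧ (∀ x : X, ∃ i, x ∈ U i) ∧
      (∀ i, EMetric.diam (U i) ≤
        (8 * n : ℝ≥0∞) * HC (n : ℝ) (Set.univ : Set X) ^ ((n : ℝ)⁻¹) + ENNReal.ofReal ε) ∧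
      (∀ x : X, {i | x ∈ U i}.encard ≤ n) := by
  intro ε hε
  obtain ⟨k, U, hopen, hcover, hdiam, hmult⟩ := stmt4_general (isCompact_univ (X := X)) n hn ε hε
  exact ⟨k, U, hopen, fun x => hcover x (mem_univ x), hdiam, hmult⟩
end
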